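/- Additivity of redundant and synergistic information: if the joint distribution of ((X,X'),(Y,Y'),(Z,Z')) is the product P((x,x'),(y,y'),(z,z')) = p(x,y,z)·p'(x',y',z'), then Red((X,X'),(Y,Y')→(Z,Z')) = Red(X,Y→Z) + Red(X',Y'→Z') and Syn((X,X'),(Y,Y')→(Z,Z')) = Syn(X,Y→Z) + Syn(X',Y'→Z'). -/

import Mathlib

open Finset

/-- Shannon entropy of a distribution on a finite type (natural-log base). -/
noncomputable def ent {α : Type*} [Fintype α] (p : α → ℝ) : ℝ :=
  ∑ a, Real.negMulLog (p a)

/-- Mutual information between the two coordinates of a joint distribution. -/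
noncomputable def mutInfo {α β : Type*} [Fintype α] [Fintype β] (q : α × β → ℝ) : ℝ :=
  ent (fun a => ∑ b, q (a, b)) + ent (fun b => ∑ a, q (a, b)) - ent q

/-- Conditional entropy of the first coordinate given the second: H(A|B) = H(A,B) - H(B). -/
noncomputable def condEntFst {α β : Type*} [Fintype α] [Fintype β] (q : α × β → ℝ) : ℝ :=
  ent q - ent (fun b => ∑ a, q (a, b))

/-- Conditional entropy of the second coordinate given the first: H(B|A) = H(A,B) - H(A). -/
noncomputable def condEntSnd {α β : Type*} [Fintype α] [Fintype β] (q : α × β → ℝ) : ℝ :=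
  ent q - ent (fun a => ∑ b, q (a, b))

section PID

variable {X Y Z : Type*} [Fintype X] [Fintype Y] [Fintype Z]

/-- 𝒳-marginal of a joint distribution on 𝒳×𝒴×𝒵. -/
noncomputable def pX (p : X × Y × Z → ℝ) (x : X) : ℝ := ∑ y, ∑ z, p (x, y, z)

/-- 𝒴-marginal. -/
noncomputable def pY (p : X × Y × Z → ℝ) (y : Y) : ℝ := ∑ x, ∑ z, p (x, y, z)

/-- 𝒵-marginal. -/
noncomputable def pZ (p : X × Y × Z → ℝ) (z : Z) : ℝ := ∑ x, ∑ y, p (x, y, z)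

/-- The do-operation: q(x,y,z) = p(x,y,z)·c(z)/p_Z(z) if p_Z(z) > 0, else 0. -/
noncomputable def doOp (p : X × Y × Z → ℝ) (c : Z → ℝ) : X × Y × Z → ℝ :=
  fun t => if 0 < pZ p t.2.2 then p t * c t.2.2 / pZ p t.2.2 else 0

/-- (𝒳,𝒵)-marginal. -/
noncomputable def margXZ (p : X × Y × Z → ℝ) : X × Z → ℝ := fun t => ∑ y, p (t.1, y, t.2)

/-- (𝒴,𝒵)-marginal. -/
noncomputable def margYZ (p : X × Y × Z → ℝ) : Y × Z → ℝ := fun t => ∑ x, p (x, t.1, t.2)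

/-- (𝒳,𝒴)-marginal. -/
noncomputable def margXY (p : X × Y × Z → ℝ) : X × Y → ℝ := fun t => ∑ z, p (t.1, t.2, z)

/-- c_y(z) = Pr(Z = z | Y = y). -/
noncomputable def cy (p : X × Y × Z → ℝ) (y : Y) : Z → ℝ :=
  fun z => (∑ x, p (x, y, z)) / pY p y

/-- The distribution of (A_y, B_y, C_y) = do(p | c_y). -/
noncomputable def doy (p : X × Y × Z → ℝ) (y : Y) : X × Y × Z → ℝ := doOp p (cy p y)

/-- c^x(z) = Pr(Z = z | X = x). -/
noncomputable def cx (p : X × Y × Z → ℝ) (x : X) : Z → ℝ :=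
  fun z => (∑ y, p (x, y, z)) / pX p x

/-- The distribution of (A^x, B^x, C^x) = do(p | c^x). -/
noncomputable def dox (p : X × Y × Z → ℝ) (x : X) : X × Y × Z → ℝ := doOp p (cx p x)

/-- Unique information Un(X→Z|Y) = Σ_{y : p_Y(y)>0} p_Y(y)·I(A_y;C_y). -/
noncomputable def Un (p : X × Y × Z → ℝ) : ℝ :=
  ∑ y ∈ Finset.univ.filter (fun y => 0 < pY p y), pY p y * mutInfo (margXZ (doy p y))

/-- Unique information Un(Y→Z|X) = Σ_{x : p_X(x)>0} p_X(x)·I(B^x;C^x). -/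
noncomputable def UnYX (p : X × Y × Z → ℝ) : ℝ :=
  ∑ x ∈ Finset.univ.filter (fun x => 0 < pX p x), pX p x * mutInfo (margYZ (dox p x))

/-- Redundant information Red(X,Y→Z) = I(X;Z) − Un(X→Z|Y). -/
noncomputable def Red (p : X × Y × Z → ℝ) : ℝ := mutInfo (margXZ p) - Un p

/-- Conditional mutual information I(X;Z|Y) = H(X,Y) + H(Y,Z) − H(Y) − H(X,Y,Z). -/
noncomputable def condMI (p : X × Y × Z → ℝ) : ℝ :=
  ent (margXY p) + ent (margYZ p) - ent (pY p) - ent p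

/-- Synergistic information Syn(X,Y→Z) = I(X;Z|Y) − Un(X→Z|Y). -/
noncomputable def Syn (p : X × Y × Z → ℝ) : ℝ := condMI p - Un p

end PID

theorem aux_sum_mul {α β : Type*} [Fintype α] [Fintype β] (f : α → ℝ) (g : β → ℝ) :
    ∑ s : α × β, f s.1 * g s.2 = (∑ a, f a) * ∑ b, g b := by
  rw [Fintype.sum_prod_type, Finset.sum_mul_sum]

theorem aux_ent_mul {α β : Type*} [Fintype α] [Fintype β] (f : α → ℝ) (g : β → ℝ) :
    ent (fun s : α × β => f s.1 * g s.2) = (∑ b, g b) * ent f + (∑ a, f a) * ent g := by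
  unfold ent
  simp only [Real.negMulLog_mul, Finset.sum_add_distrib]
  rw [aux_sum_mul f (fun b => Real.negMulLog (g b))]
  congr 1
  rw [mul_comm, ← aux_sum_mul (fun a => Real.negMulLog (f a)) g]
  exact Finset.sum_congr rfl fun _ _ => mul_comm _ _

theorem aux_ent_equiv {α β : Type*} [Fintype α] [Fintype β] (e : α ≃ β) (f : β → ℝ) :
    ent (fun a => f (e a)) = ent f :=
  Equiv.sum_comp e (fun b => Real.negMulLog (f b))

theorem aux_ent_mul2 {α α' β β' : Type*} [Fintype α] [Fintype β] [Fintype α'] [Fintype β']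
    (f : α × β → ℝ) (g : α' × β' → ℝ) :
    ent (fun s : (α × α') × (β × β') => f (s.1.1, s.2.1) * g (s.1.2, s.2.2))
      = (∑ b, g b) * ent f + (∑ a, f a) * ent g := by
  rw [← aux_ent_mul]
  exact aux_ent_equiv (Equiv.prodProdProdComm α α' β β') (fun s => f s.1 * g s.2)

theorem aux_ent_mul3 {X Y Z X' Y' Z' : Type*}
    [Fintype X] [Fintype Y] [Fintype Z] [Fintype X'] [Fintype Y'] [Fintype Z']
    (f : X × Y × Z → ℝ) (g : X' × Y' × Z' → ℝ) :
    ent (fun s : (X × X') × (Y × Y') × (Z × Z') =>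
      f (s.1.1, s.2.1.1, s.2.2.1) * g (s.1.2, s.2.1.2, s.2.2.2))
      = (∑ b, g b) * ent f + (∑ a, f a) * ent g := by
  rw [← aux_ent_mul2]
  exact aux_ent_equiv ((Equiv.refl (X × X')).prodCongr (Equiv.prodProdProdComm Y Y' Z Z'))
    (fun s : (X × X') × ((Y × Z) × (Y' × Z')) => f (s.1.1, s.2.1) * g (s.1.2, s.2.2))

theorem aux_mutInfo {α α' β β' : Type*} [Fintype α] [Fintype β] [Fintype α'] [Fintype β']
    (f : α × β → ℝ) (g : α' × β' → ℝ) :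
    mutInfo (fun s : (α × α') × (β × β') => f (s.1.1, s.2.1) * g (s.1.2, s.2.2))
      = (∑ b, g b) * mutInfo f + (∑ a, f a) * mutInfo g := by
  unfold mutInfo
  rw [aux_ent_mul2]
  have h1 : (fun a : α × α' => ∑ b : β × β', f (a.1, b.1) * g (a.2, b.2))
      = fun a => (∑ b, f (a.1, b)) * ∑ b, g (a.2, b) := by
    funext a
    exact aux_sum_mul (fun b => f (a.1, b)) (fun b => g (a.2, b))
  have h2 : (fun b : β × β' => ∑ a : α × α', f (a.1, b.1) * g (a.2, b.2))
      = fun b => (∑ a, f (a, b.1)) * ∑ a, g (a, b.2) := by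
    funext b
    exact aux_sum_mul (fun a => f (a, b.1)) (fun a => g (a, b.2))
  simp only [] at h1 h2 ⊢
  rw [h1, h2, aux_ent_mul (fun a => ∑ b, f (a, b)) (fun a => ∑ b, g (a, b)),
    aux_ent_mul (fun b => ∑ a, f (a, b)) (fun b => ∑ a, g (a, b))]
  rw [← Fintype.sum_prod_type f, ← Fintype.sum_prod_type g, ← Fintype.sum_prod_type_right f,
    ← Fintype.sum_prod_type_right g]
  ring

section
variable {X Y Z X' Y' Z' : Type*}
    [Fintype X] [Fintype Y] [Fintype Z] [Fintype X'] [Fintype Y'] [Fintype Z']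

/-- product distribution -/
def auxP (p : X × Y × Z → ℝ) (p' : X' × Y' × Z' → ℝ) : (X × X') × (Y × Y') × (Z × Z') → ℝ :=
  fun s => p (s.1.1, s.2.1.1, s.2.2.1) * p' (s.1.2, s.2.1.2, s.2.2.2)

theorem aux_sum_margXZ (p : X × Y × Z → ℝ) : ∑ t, margXZ p t = ∑ t, p t := by
  simp only [margXZ, Fintype.sum_prod_type]
  exact Finset.sum_congr rfl fun _ _ => Finset.sum_comm

theorem aux_sum_margYZ (p : X × Y × Z → ℝ) : ∑ t, margYZ p t = ∑ t, p t := by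
  simp only [margYZ]
  rw [Fintype.sum_prod_type_right p]

theorem aux_sum_margXY (p : X × Y × Z → ℝ) : ∑ t, margXY p t = ∑ t, p t := by
  simp only [margXY, Fintype.sum_prod_type]

theorem aux_sum_pY (p : X × Y × Z → ℝ) : ∑ t, pY p t = ∑ t, p t := by
  simp only [pY, Fintype.sum_prod_type]
  exact Finset.sum_comm

variable (p : X × Y × Z → ℝ) (p' : X' × Y' × Z' → ℝ)

theorem aux_margXZ : margXZ (auxP p p') =
    fun s => margXZ p (s.1.1, s.2.1) * margXZ p' (s.1.2, s.2.2) := by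
  funext s
  exact aux_sum_mul (fun y => p (s.1.1, y, s.2.1)) (fun y => p' (s.1.2, y, s.2.2))

theorem aux_margYZ : margYZ (auxP p p') =
    fun s => margYZ p (s.1.1, s.2.1) * margYZ p' (s.1.2, s.2.2) := by
  funext s
  exact aux_sum_mul (fun x => p (x, s.1.1, s.2.1)) (fun x => p' (x, s.1.2, s.2.2))

theorem aux_margXY : margXY (auxP p p') =
    fun s => margXY p (s.1.1, s.2.1) * margXY p' (s.1.2, s.2.2) := by
  funext s
  exact aux_sum_mul (fun z => p (s.1.1, s.2.1, z)) (fun z => p' (s.1.2, s.2.2, z))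

theorem aux_pY : pY (auxP p p') = fun s => pY p s.1 * pY p' s.2 := by
  funext s
  unfold pY
  rw [← aux_sum_mul]
  refine Finset.sum_congr rfl fun x _ => ?_
  exact aux_sum_mul (fun z => p (x.1, s.1, z)) (fun z => p' (x.2, s.2, z))

theorem aux_pZ : pZ (auxP p p') = fun s => pZ p s.1 * pZ p' s.2 := by
  funext s
  unfold pZ
  rw [← aux_sum_mul]
  refine Finset.sum_congr rfl fun x _ => ?_
  exact aux_sum_mul (fun y => p (x.1, y, s.1)) (fun y => p' (x.2, y, s.2))

theorem aux_pZ_nonneg (hp : ∀ t, 0 ≤ p t) (z : Z) : 0 ≤ pZ p z :=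
  Finset.sum_nonneg fun _ _ => Finset.sum_nonneg fun _ _ => hp _

theorem aux_pY_nonneg (hp : ∀ t, 0 ≤ p t) (y : Y) : 0 ≤ pY p y :=
  Finset.sum_nonneg fun _ _ => Finset.sum_nonneg fun _ _ => hp _

theorem aux_doy (hp : ∀ t, 0 ≤ p t) (y : Y) (t : X × Y × Z) :
    doy p y t = p t * (margYZ p (y, t.2.2) / pY p y) / pZ p t.2.2 := by
  unfold doy doOp
  split_ifs with h
  · rfl
  · have : pZ p t.2.2 = 0 := le_antisymm (not_lt.1 h) (aux_pZ_nonneg p hp _)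
    rw [this, div_zero]

theorem aux_P_nonneg (hp : ∀ t, 0 ≤ p t) (hp' : ∀ t, 0 ≤ p' t) (t) : 0 ≤ auxP p p' t :=
  mul_nonneg (hp _) (hp' _)

theorem aux_doyP (hp : ∀ t, 0 ≤ p t) (hp' : ∀ t, 0 ≤ p' t) (y : Y × Y') :
    doy (auxP p p') y = auxP (doy p y.1) (doy p' y.2) := by
  funext t
  rw [aux_doy _ (aux_P_nonneg p p' hp hp'), aux_margYZ, aux_pY, aux_pZ]
  simp only [auxP, aux_doy p hp, aux_doy p' hp']
  rw [mul_div_mul_comm, ← mul_div_mul_comm]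
  ring

theorem aux_sum_doy (hp : ∀ t, 0 ≤ p t) (y : Y) :
    pY p y * ∑ t, doy p y t = pY p y := by
  by_cases h0 : pY p y = 0
  · rw [h0, zero_mul]
  have h1 : ∑ t, doy p y t = ∑ z, margYZ p (y, z) / pY p y := by
    rw [← aux_sum_margXZ, Fintype.sum_prod_type_right]
    refine Finset.sum_congr rfl fun z _ => ?_
    simp only [margXZ, aux_doy p hp]
    simp only [← Finset.sum_div, ← Finset.sum_mul]
    change pZ p z * _ / pZ p z = _
    by_cases hz : pZ p z = 0
    · have h2 : ∀ x, p (x, y, z) = 0 := by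
        intro x
        have h3 := (Finset.sum_eq_zero_iff_of_nonneg
          (fun x _ => Finset.sum_nonneg fun y _ => hp (x, y, z))).1 hz x (Finset.mem_univ _)
        exact (Finset.sum_eq_zero_iff_of_nonneg (fun y _ => hp (x, y, z))).1 h3 y
          (Finset.mem_univ _)
      simp [margYZ, h2]
    · field_simp
  have h2 : ∑ z, margYZ p (y, z) = pY p y := Finset.sum_comm
  rw [h1, ← Finset.sum_div, h2, div_self h0, mul_one]

theorem aux_Un (hp : ∀ t, 0 ≤ p t) :
    Un p = ∑ y, pY p y * mutInfo (margXZ (doy p y)) := by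
  unfold Un
  refine Finset.sum_subset (Finset.filter_subset _ _) fun y _ hy => ?_
  have : pY p y = 0 := le_antisymm (by simpa using hy) (aux_pY_nonneg p hp y)
  rw [this, zero_mul]

theorem aux_UnP (hp : ∀ t, 0 ≤ p t) (hp' : ∀ t, 0 ≤ p' t)
    (h1 : ∑ t, p t = 1) (h1' : ∑ t, p' t = 1) :
    Un (auxP p p') = Un p + Un p' := by
  rw [aux_Un _ (aux_P_nonneg p p' hp hp'), aux_Un p hp, aux_Un p' hp']
  have key : ∀ y : Y × Y', pY (auxP p p') y * mutInfo (margXZ (doy (auxP p p') y))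
      = (pY p y.1 * mutInfo (margXZ (doy p y.1))) * pY p' y.2
        + pY p y.1 * (pY p' y.2 * mutInfo (margXZ (doy p' y.2))) := by
    intro y
    rw [aux_doyP p p' hp hp', aux_margXZ, aux_mutInfo, aux_pY, aux_sum_margXZ, aux_sum_margXZ]
    have e1 := aux_sum_doy p hp y.1
    have e2 := aux_sum_doy p' hp' y.2
    simp only []
    linear_combination (pY p y.1 * mutInfo (margXZ (doy p y.1))) * e2
      + (pY p' y.2 * mutInfo (margXZ (doy p' y.2))) * e1
  simp only [key, Finset.sum_add_distrib]
  rw [aux_sum_mul (fun y => pY p y * mutInfo (margXZ (doy p y))) (pY p'),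
    aux_sum_mul (pY p) (fun y => pY p' y * mutInfo (margXZ (doy p' y))),
    aux_sum_pY, aux_sum_pY, h1, h1', one_mul, mul_one]

end

theorem stmt17 {X Y Z X' Y' Z' : Type*}
    [Fintype X] [Fintype Y] [Fintype Z] [Fintype X'] [Fintype Y'] [Fintype Z']
    [Nonempty X] [Nonempty Y] [Nonempty Z] [Nonempty X'] [Nonempty Y'] [Nonempty Z']
    (p : X × Y × Z → ℝ) (hp0 : ∀ t, 0 ≤ p t) (hp1 : ∑ t, p t = 1)
    (p' : X' × Y' × Z' → ℝ) (hp'0 : ∀ t, 0 ≤ p' t) (hp'1 : ∑ t, p' t = 1) :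
    Red (fun s : (X × X') × (Y × Y') × (Z × Z') =>
      p (s.1.1, s.2.1.1, s.2.2.1) * p' (s.1.2, s.2.1.2, s.2.2.2)) = Red p + Red p' ∧
    Syn (fun s : (X × X') × (Y × Y') × (Z × Z') =>
      p (s.1.1, s.2.1.1, s.2.2.1) * p' (s.1.2, s.2.1.2, s.2.2.2)) = Syn p + Syn p' := by
  change Red (auxP p p') = _ ∧ Syn (auxP p p') = _
  have hU := aux_UnP p p' hp0 hp'0 hp1 hp'1
  constructor
  · unfold Red
    rw [hU, aux_margXZ, aux_mutInfo, aux_sum_margXZ, aux_sum_margXZ, hp1, hp'1]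
    ring
  · unfold Syn condMI
    have h3 : ent (auxP p p') = _ := aux_ent_mul3 p p'
    rw [hU, h3, aux_margXY, aux_margYZ, aux_pY, aux_ent_mul2, aux_ent_mul2, aux_ent_mul,
      aux_sum_margXY, aux_sum_margXY, aux_sum_margYZ, aux_sum_margYZ, aux_sum_pY, aux_sum_pY,
      hp1, hp'1]
    ring
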